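/- Let μ ∈ ℝ, μ ≠ 0, let h : ℝ → ℝ be smooth with h'(x) ≠ 0 for all x, and let a₀, a₁, a₂ : ℝ → ℝ be smooth functions satisfying, for all x ∈ ℝ: a₀'h' − 4a₀h'' = 0; μa₀h' + a₁'h' − 3a₁h'' = 0; μa₁h' + a₂'h' − 4a₀h'' − 2a₂h'' = 0. Then there exist real constants A₀, A₁, A₂ such that for all x ∈ ℝ: a₀(x) = (A₀/μ)h'(x)⁴, a₁(x) = (A₁ − A₀h(x))h'(x)³, and a₂(x) = ((1/2)μA₀h(x)² + (2A₀/μ)h'(x)² − μA₁h(x) + A₂/μ)·h'(x)². -/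

import Mathlib

/-!
Each equation has the form `a' * v - n * a * v' = G' * v ^ (n + 1)` with `v = h'` and
`n = 4, 3, 2`. The left-hand side is `v ^ (n + 1)` times the derivative of `a / v ^ n`, so
`a = (G + c) * v ^ n` for a constant `c`. Substituting the coefficients already found makes `G`
an explicit polynomial in `h` and `h'`, so the equations are integrated one after the other.
-/

theorem hasDerivAt_div_pow {𝕜 : Type*} [NontriviallyNormedField 𝕜] {a v : 𝕜 → 𝕜} {a' v' x : 𝕜}
    (ha : HasDerivAt a a' x) (hv : HasDerivAt v v' x) (hx : v x ≠ 0) (n : ℕ) :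
    HasDerivAt (fun y ↦ a y / v y ^ n) ((a' * v x - n * a x * v') / v x ^ (n + 1)) x := by
  refine (ha.fun_div (hv.fun_pow n) (pow_ne_zero n hx)).congr_deriv ?_
  cases n with
  | zero => simp [hx]
  | succ m =>
    rw [Nat.add_sub_cancel]
    field_simp
    ring

section Integration

variable {𝕜 : Type*} [RCLike 𝕜] {s : Set 𝕜}

theorem exists_eq_add_const_mul_pow {a a' v v' G G' : 𝕜 → 𝕜} (hs : IsOpen s)
    (hs' : IsPreconnected s) (n : ℕ) (ha : ∀ x ∈ s, HasDerivAt a (a' x) x)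
    (hv : ∀ x ∈ s, HasDerivAt v (v' x) x) (hG : ∀ x ∈ s, HasDerivAt G (G' x) x)
    (hv₀ : ∀ x ∈ s, v x ≠ 0)
    (heq : ∀ x ∈ s, a' x * v x - n * a x * v' x = G' x * v x ^ (n + 1)) :
    ∃ c, ∀ x ∈ s, a x = (G x + c) * v x ^ n := by
  have hquot : ∀ x ∈ s, HasDerivAt (fun y ↦ a y / v y ^ n) (G' x) x := fun x hx ↦
    (hasDerivAt_div_pow (ha x hx) (hv x hx) (hv₀ x hx) n).congr_deriv <| by
      rw [heq x hx, mul_div_cancel_right₀ _ (pow_ne_zero _ (hv₀ x hx))]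
  obtain ⟨c, hc⟩ := hs.exists_eq_add_of_deriv_eq hs'
    (fun x hx ↦ (hquot x hx).differentiableAt.differentiableWithinAt)
    (fun x hx ↦ (hG x hx).differentiableAt.differentiableWithinAt)
    (fun x hx ↦ (hquot x hx).deriv.trans (hG x hx).deriv.symm)
  exact ⟨c, fun x hx ↦ (div_eq_iff (pow_ne_zero n (hv₀ x hx))).mp (hc hx)⟩

theorem stmt_2_general {h h' h'' a₀ a₀' a₁ a₁' a₂ a₂' : 𝕜 → 𝕜} (μ : 𝕜) (hs : IsOpen s)
    (hs' : IsPreconnected s) (hh : ∀ x ∈ s, HasDerivAt h (h' x) x)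
    (hh' : ∀ x ∈ s, HasDerivAt h' (h'' x) x) (hh'₀ : ∀ x ∈ s, h' x ≠ 0)
    (ha₀ : ∀ x ∈ s, HasDerivAt a₀ (a₀' x) x) (ha₁ : ∀ x ∈ s, HasDerivAt a₁ (a₁' x) x)
    (ha₂ : ∀ x ∈ s, HasDerivAt a₂ (a₂' x) x)
    (heq₀ : ∀ x ∈ s, a₀' x * h' x - 4 * a₀ x * h'' x = 0)
    (heq₁ : ∀ x ∈ s, μ * a₀ x * h' x + a₁' x * h' x - 3 * a₁ x * h'' x = 0)
    (heq₂ : ∀ x ∈ s,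
      μ * a₁ x * h' x + a₂' x * h' x - 4 * a₀ x * h'' x - 2 * a₂ x * h'' x = 0) :
    ∃ c₀ c₁ c₂ : 𝕜, ∀ x ∈ s,
      a₀ x = c₀ * h' x ^ 4
      ∧ a₁ x = (c₁ - μ * c₀ * h x) * h' x ^ 3
      ∧ a₂ x = (μ ^ 2 * c₀ / 2 * h x ^ 2 + 2 * c₀ * h' x ^ 2 - μ * c₁ * h x + c₂) * h' x ^ 2 := by
  obtain ⟨c₀, hc₀⟩ : ∃ c₀, ∀ x ∈ s, a₀ x = (0 + c₀) * h' x ^ 4 :=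
    exists_eq_add_const_mul_pow hs hs' 4 ha₀ hh' (fun x _ ↦ hasDerivAt_const x 0) hh'₀
      fun x hx ↦ by simpa using heq₀ x hx
  simp only [zero_add] at hc₀
  obtain ⟨c₁, hc₁⟩ : ∃ c₁, ∀ x ∈ s, a₁ x = (-(μ * c₀) * h x + c₁) * h' x ^ 3 :=
    exists_eq_add_const_mul_pow hs hs' 3 ha₁ hh' (fun x hx ↦ (hh x hx).const_mul (-(μ * c₀))) hh'₀
      fun x hx ↦ by
        push_cast
        linear_combination heq₁ x hx - μ * h' x * hc₀ x hx
  have hprimitive : ∀ x ∈ s, HasDerivAt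
      (fun y ↦ μ ^ 2 * c₀ / 2 * h y ^ 2 + 2 * c₀ * h' y ^ 2 - μ * c₁ * h y)
      (μ ^ 2 * c₀ * h x * h' x + 4 * c₀ * h' x * h'' x - μ * c₁ * h' x) x := fun x hx ↦
    (((((hh x hx).fun_pow 2).const_mul (μ ^ 2 * c₀ / 2)).fun_add
      (((hh' x hx).fun_pow 2).const_mul (2 * c₀))).fun_sub
      ((hh x hx).const_mul (μ * c₁))).congr_deriv <| by
        push_cast
        ring
  obtain ⟨c₂, hc₂⟩ := exists_eq_add_const_mul_pow hs hs' 2 ha₂ hh' hprimitive hh'₀ fun x hx ↦ by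
    push_cast
    linear_combination heq₂ x hx + 4 * h'' x * hc₀ x hx - μ * h' x * hc₁ x hx
  exact ⟨c₀, c₁, c₂, fun x hx ↦ ⟨hc₀ x hx, by rw [hc₁ x hx]; ring, hc₂ x hx⟩⟩

end Integration

theorem stmt_2 (μ : ℝ) (hμ : μ ≠ 0) (h a0 a1 a2 : ℝ → ℝ)
    (hh : ContDiff ℝ (⊤ : ℕ∞) h) (hhx : ∀ x, deriv h x ≠ 0)
    (ha0 : ContDiff ℝ (⊤ : ℕ∞) a0) (ha1 : ContDiff ℝ (⊤ : ℕ∞) a1) (ha2 : ContDiff ℝ (⊤ : ℕ∞) a2)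
    (heq1 : ∀ x : ℝ, deriv a0 x * deriv h x - 4 * a0 x * deriv (deriv h) x = 0)
    (heq2 : ∀ x : ℝ,
      μ * a0 x * deriv h x + deriv a1 x * deriv h x - 3 * a1 x * deriv (deriv h) x = 0)
    (heq3 : ∀ x : ℝ,
      μ * a1 x * deriv h x + deriv a2 x * deriv h x
        - 4 * a0 x * deriv (deriv h) x - 2 * a2 x * deriv (deriv h) x = 0) :
    ∃ A0 A1 A2 : ℝ, ∀ x : ℝ,
      a0 x = A0 / μ * (deriv h x)^4
      ∧ a1 x = (A1 - A0 * h x) * (deriv h x)^3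
      ∧ a2 x = ((1/2) * μ * A0 * (h x)^2 + 2 * A0 / μ * (deriv h x)^2
                 - μ * A1 * h x + A2 / μ) * (deriv h x)^2 := by
  have hderiv {f : ℝ → ℝ} (hf : ContDiff ℝ (⊤ : ℕ∞) f) (x : ℝ) (_ : x ∈ Set.univ) :
      HasDerivAt f (deriv f x) x := (hf.differentiable (by simp) x).hasDerivAt
  obtain ⟨c₀, c₁, c₂, hc⟩ := stmt_2_general μ isOpen_univ isPreconnected_univ (hderiv hh)
    (hderiv (contDiff_infty_iff_deriv.mp hh).2) (fun x _ ↦ hhx x) (hderiv ha0) (hderiv ha1)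
    (hderiv ha2) (fun x _ ↦ heq1 x) (fun x _ ↦ heq2 x) (fun x _ ↦ heq3 x)
  refine ⟨μ * c₀, c₁, μ * c₂, fun x ↦ ?_⟩
  obtain ⟨h₀, h₁, h₂⟩ := hc x (Set.mem_univ x)
  exact ⟨by rw [h₀]; field_simp, h₁, by rw [h₂]; field_simp⟩
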